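/- arXiv:2206.14929 — 2 statements merged into one kernel-verified Lean document; each statement's English description precedes it below -/
import Mathlib

section
/- For every N ∈ ℕ and every vector ψ ∈ Q_N, the teleportation identity holds: 2^{−N} · Σ_{r,s ∈ {0,1}^N} (σx(r)σz(s) ⊗ σx(r)σz(s) ⊗ Id_{Q_N})(ψ ⊗ φ+_N) = 2^{−N/2} · Σ_{x ∈ {0,1}^N} e_x ⊗ e_x ⊗ ψ, as an equality in Q_N ⊗ Q_N ⊗ Q_N (on the left, ψ occupies the first tensor factor and φ+_N the last two; on the right, the maximally entangled state occupies the first two factors and ψ the third). -/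
open scoped Matrix Kronecker ComplexConjugate

noncomputable section

/-- Bit vectors of length `N`, i.e. elements of `{0,1}^N`. -/
abbrev BV (N : ℕ) := Fin N → Bool

/-- The space `Q_N` of functions `{0,1}^N → ℂ`. -/
abbrev QV (N : ℕ) := BV N → ℂ

/-- Linear operators on `Q_N`, represented as matrices in the standard basis. -/
abbrev QOp (N : ℕ) := Matrix (BV N) (BV N) ℂ

/-- Bitwise XOR of bit vectors. -/
def bvXor {N : ℕ} (x r : BV N) : BV N := fun i => xor (x i) (r i)

/-- The sign `(-1)^{s·x}` where `s·x = Σ_i s_i x_i mod 2`. -/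
def bSign {N : ℕ} (s x : BV N) : ℂ :=
  (-1 : ℂ) ^ (Finset.univ.filter fun i => s i = true ∧ x i = true).card

/-- The standard basis vector `e_x` of `Q_N`. -/
def eVec {N : ℕ} (x : BV N) : QV N := fun y => if y = x then 1 else 0

/-- Tensor product of two vectors (as functions). -/
def tensVec {α β : Type*} (f : α → ℂ) (g : β → ℂ) : α × β → ℂ := fun p => f p.1 * g p.2

/-- The Pauli parity operator `σx(r)`, sending `e_x` to `e_{x ⊕ r}`. -/
def sigmaX {N : ℕ} (r : BV N) : QOp N :=
  Matrix.of fun y x => if y = bvXor x r then 1 else 0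

/-- The Pauli parity operator `σz(s)`, sending `e_x` to `(-1)^{s·x} e_x`. -/
def sigmaZ {N : ℕ} (s : BV N) : QOp N :=
  Matrix.diagonal fun x => bSign s x

/-- The scalar `2^{-N/2}`. -/
def invSqrt2pow (N : ℕ) : ℂ := (((Real.sqrt 2)⁻¹ : ℝ) : ℂ) ^ N

/-- The maximally entangled state `φ⁺_N = 2^{-N/2} Σ_x e_x ⊗ e_x`. -/
def phiPlus (N : ℕ) : BV N × BV N → ℂ :=
  invSqrt2pow N • ∑ x : BV N, tensVec (eVec x) (eVec x)

/-- The standard (complex) inner product on a finite function space. -/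
def qInner {α : Type*} [Fintype α] (f g : α → ℂ) : ℂ :=
  ∑ x, (starRingEnd ℂ) (f x) * g x

/-- The norm associated to `qInner`. -/
def qNorm {α : Type*} [Fintype α] (f : α → ℂ) : ℝ :=
  Real.sqrt (qInner f f).re

/-- A binary observable: a self-adjoint operator squaring to the identity. -/
def IsBinaryObs {ι : Type*} [Fintype ι] [DecidableEq ι] (O : Matrix ι ι ℂ) : Prop :=
  O.IsHermitian ∧ O * O = 1

/-- For pairwise commuting operators `X i`, the parity product `X(r) = ∏_{i : r_i = 1} X_i`. -/
def obsProd {n : ℕ} {ι : Type*} [Fintype ι] [DecidableEq ι]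
    (X : Fin n → Matrix ι ι ℂ) (hX : ∀ i j, Commute (X i) (X j)) (r : BV n) :
    Matrix ι ι ℂ :=
  (Finset.univ.filter fun i => r i = true).noncommProd X fun i _ j _ _ => hX i j

/-- The set of bit vectors supported on `R`. -/
def suppSet {N : ℕ} (R : Finset (Fin N)) : Finset (BV N) :=
  Finset.univ.filter fun u => ∀ i, u i = true → i ∈ R

/-- The projector `Π^{σx}_u = 2^{-|R|} Σ_{u' supported on R} (-1)^{u·u'} σx(u')`. -/
def projPauliX {N : ℕ} (R : Finset (Fin N)) (u : BV N) : QOp N :=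
  ((2 : ℂ) ^ R.card)⁻¹ • ∑ u' ∈ suppSet R, bSign u u' • sigmaX u'

/-- The projector `Π^{σz}_v = 2^{-|S|} Σ_{v' supported on S} (-1)^{v·v'} σz(v')`. -/
def projPauliZ {N : ℕ} (S : Finset (Fin N)) (v : BV N) : QOp N :=
  ((2 : ℂ) ^ S.card)⁻¹ • ∑ v' ∈ suppSet S, bSign v v' • sigmaZ v'

/-- The projector `Π^X_u = 2^{-|R|} Σ_{u' supported on R} (-1)^{u·u'} X(u')`
for a family of commuting binary observables. -/
def projObs {N : ℕ} {ι : Type*} [Fintype ι] [DecidableEq ι]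
    (X : Fin N → Matrix ι ι ℂ) (hX : ∀ i j, Commute (X i) (X j))
    (R : Finset (Fin N)) (u : BV N) : Matrix ι ι ℂ :=
  ((2 : ℂ) ^ R.card)⁻¹ • ∑ u' ∈ suppSet R, bSign u u' • obsProd X hX u'

/-- The extracted global vector
`Φ = 2^{-N} Σ_{r,s} (X(r)Z(s) ⊗ σx(r)σz(s) ⊗ Id)(ψ ⊗ φ⁺_N)`. -/
def extractedVec {N : ℕ} {ι : Type*} [Fintype ι] [DecidableEq ι]
    (X Z : Fin N → Matrix ι ι ℂ)
    (hX : ∀ i j, Commute (X i) (X j)) (hZ : ∀ i j, Commute (Z i) (Z j))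
    (ψ : ι → ℂ) : ι × BV N × BV N → ℂ :=
  ((2 : ℂ) ^ N)⁻¹ • ∑ r : BV N, ∑ s : BV N,
    ((obsProd X hX r * obsProd Z hZ s) ⊗ₖ ((sigmaX r * sigmaZ s) ⊗ₖ (1 : QOp N))).mulVec
      (tensVec ψ (phiPlus N))


/-!
The twirl `∑_{r,s} σx(r)σz(s) ⊗ σx(r)σz(s)` factors as `(∑_r σx(r) ⊗ σx(r)) (∑_s σz(s) ⊗ σz(s))`.
By orthogonality of characters the second factor is `2^N` times the projection onto the span of the
`e_x ⊗ e_x`, and the first one sends each `e_x ⊗ e_x` to `∑_y e_y ⊗ e_y`. The twirl is therefore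
`4^N |φ⁺⟩⟨φ⁺|`, and what remains is the contraction `(⟨φ⁺| ⊗ Id)(ψ ⊗ φ⁺) = 2^{-N} ψ`.
-/

section

open Matrix

variable {N : ℕ}

theorem sum_kronecker_kronecker {R κ l m n p q r : Type*} [NonUnitalSemiring R] (s : Finset κ)
    (A : κ → Matrix l m R) (B : κ → Matrix n p R) (C : Matrix q r R) :
    ∑ k ∈ s, A k ⊗ₖ (B k ⊗ₖ C) =
      ((∑ k ∈ s, A k ⊗ₖ B k) ⊗ₖ C).submatrix
        (Equiv.prodAssoc l n q).symm (Equiv.prodAssoc m p r).symm := by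
  ext
  simp [Matrix.sum_apply, Finset.sum_mul, mul_assoc]

theorem bvXor_involutive (x : BV N) : Function.Involutive (bvXor x) := by
  intro r
  ext i
  simp [bvXor]

theorem bSign_eq_prod (s x : BV N) : bSign s x = ∏ i, if s i ∧ x i then -1 else 1 := by
  simp [bSign, Finset.prod_ite]

theorem sum_bSign_mul_bSign (x y : BV N) :
    ∑ s, bSign s x * bSign s y = if x = y then 2 ^ N else 0 := by
  have sum_bit (a b : Bool) :
      ∑ c : Bool, (if c ∧ a then (-1 : ℂ) else 1) * (if c ∧ b then -1 else 1) =
        if a = b then 2 else 0 := by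
    cases a <;> cases b <;> norm_num
  calc ∑ s, bSign s x * bSign s y
      = ∏ i, ∑ c : Bool, (if c ∧ x i then (-1 : ℂ) else 1) * (if c ∧ y i then -1 else 1) := by
        simp only [bSign_eq_prod, ← Finset.prod_mul_distrib, Fintype.prod_sum]
    _ = ∏ i, if x i = y i then 2 else 0 := by simp only [sum_bit]
    _ = if x = y then 2 ^ N else 0 := by simp [Finset.prod_ite_zero, funext_iff]

theorem sum_sigmaZ_kronecker_sigmaZ :
    ∑ s : BV N, sigmaZ s ⊗ₖ sigmaZ s =
      (2 : ℂ) ^ N • diagonal fun p : BV N × BV N => if p.1 = p.2 then 1 else 0 := by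
  simp only [sigmaZ, diagonal_kronecker_diagonal]
  ext p q
  simp [Matrix.sum_apply, diagonal_apply, Finset.sum_ite_irrel, sum_bSign_mul_bSign]

theorem sum_sigmaX_kronecker_sigmaX_apply (a b x : BV N) :
    (∑ r : BV N, sigmaX r ⊗ₖ sigmaX r) (a, b) (x, x) = if a = b then 1 else 0 :=
  calc _ = ∑ r, (if a = bvXor x r then (1 : ℂ) else 0) * if b = bvXor x r then 1 else 0 := by
        simp only [Matrix.sum_apply, kroneckerMap_apply, sigmaX, of_apply]
    _ = ∑ y, (if a = y then (1 : ℂ) else 0) * if b = y then 1 else 0 :=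
        (bvXor_involutive x).bijective.sum_comp fun y =>
          (if a = y then (1 : ℂ) else 0) * if b = y then 1 else 0
    _ = if a = b then 1 else 0 := by simp

theorem invSqrt2pow_mul_self (N : ℕ) : invSqrt2pow N * invSqrt2pow N = (2 ^ N)⁻¹ := by
  have inv_sqrt_two_mul_self : (((Real.sqrt 2)⁻¹ : ℝ) : ℂ) * (((Real.sqrt 2)⁻¹ : ℝ) : ℂ) = 2⁻¹ := by
    rw [← Complex.ofReal_mul, ← mul_inv, Real.mul_self_sqrt zero_le_two]
    norm_num
  rw [invSqrt2pow, ← mul_pow, inv_sqrt_two_mul_self, inv_pow]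

theorem phiPlus_apply (a b : BV N) : phiPlus N (a, b) = if a = b then invSqrt2pow N else 0 := by
  simp [phiPlus, tensVec, eVec]

theorem sum_pauli_kronecker_pauli :
    ∑ r : BV N, ∑ s : BV N, (sigmaX r * sigmaZ s) ⊗ₖ (sigmaX r * sigmaZ s) =
      ((2 : ℂ) ^ N * 2 ^ N) • vecMulVec (phiPlus N) (phiPlus N) := by
  simp only [mul_kronecker_mul, ← Finset.mul_sum, ← Finset.sum_mul, sum_sigmaZ_kronecker_sigmaZ]
  ext ⟨a, b⟩ ⟨x, y⟩
  rw [Matrix.mul_smul, Matrix.smul_apply, mul_diagonal, Matrix.smul_apply, vecMulVec_apply,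
    phiPlus_apply, phiPlus_apply]
  by_cases hxy : x = y
  · subst hxy
    by_cases hab : a = b <;>
      simp [sum_sigmaX_kronecker_sigmaX_apply, hab, invSqrt2pow_mul_self]
  · simp [hxy]

theorem vecMulVec_phiPlus_kronecker_one_mulVec {ι : Type*} (u : ι → ℂ) (ψ : QV N) :
    (vecMulVec u (phiPlus N) ⊗ₖ (1 : QOp N)) *ᵥ (tensVec ψ (phiPlus N) ∘ Equiv.prodAssoc _ _ _) =
      ((2 : ℂ) ^ N)⁻¹ • tensVec u ψ := by
  ext ⟨i, c⟩
  calc _ = u i * invSqrt2pow N * (ψ c * invSqrt2pow N) := by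
        simp [mulVec, dotProduct, Fintype.sum_prod_type, vecMulVec_apply, one_apply, tensVec,
          phiPlus_apply]
    _ = invSqrt2pow N * invSqrt2pow N * (u i * ψ c) := by ring
    _ = (((2 : ℂ) ^ N)⁻¹ • tensVec u ψ) (i, c) := by rw [invSqrt2pow_mul_self]; rfl

theorem tensVec_phiPlus_comp_prodAssoc_symm {ι : Type*} (ψ : ι → ℂ) :
    tensVec (phiPlus N) ψ ∘ (Equiv.prodAssoc _ _ _).symm =
      invSqrt2pow N • ∑ x : BV N, tensVec (eVec x) (tensVec (eVec x) ψ) := by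
  ext ⟨a, b, c⟩
  simp [phiPlus, tensVec, Finset.sum_mul, mul_assoc]

end

/-- Teleportation identity, eq. (1) of the paper:
`2^{-N} Σ_{r,s} (σx(r)σz(s) ⊗ σx(r)σz(s) ⊗ Id)(ψ ⊗ φ⁺_N) = 2^{-N/2} Σ_x e_x ⊗ e_x ⊗ ψ`. -/
theorem teleportation_identity (N : ℕ) (ψ : QV N) :
    ((2 : ℂ) ^ N)⁻¹ • ∑ r : BV N, ∑ s : BV N,
        (((sigmaX r * sigmaZ s) ⊗ₖ ((sigmaX r * sigmaZ s) ⊗ₖ (1 : QOp N))).mulVec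
          (tensVec ψ (phiPlus N)))
      = invSqrt2pow N • ∑ x : BV N, tensVec (eVec x) (tensVec (eVec x) ψ) := by
  let e := Equiv.prodAssoc (BV N) (BV N) (BV N)
  calc _ = ((2 : ℂ) ^ N)⁻¹ •
          (((∑ r : BV N, ∑ s : BV N, (sigmaX r * sigmaZ s) ⊗ₖ (sigmaX r * sigmaZ s)) ⊗ₖ
            (1 : QOp N)) *ᵥ (tensVec ψ (phiPlus N) ∘ e)) ∘ e.symm := by
        simp only [← Matrix.sum_mulVec, ← Fintype.sum_prod_type']
        rw [sum_kronecker_kronecker, Matrix.submatrix_mulVec_equiv, Equiv.symm_symm]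
    _ = tensVec (phiPlus N) ψ ∘ e.symm := by
        rw [sum_pauli_kronecker_pauli, Matrix.smul_kronecker, Matrix.smul_mulVec,
          vecMulVec_phiPlus_kronecker_one_mulVec, smul_smul, mul_inv_cancel_right₀ (by simp)]
        ext
        simp
    _ = invSqrt2pow N • ∑ x : BV N, tensVec (eVec x) (tensVec (eVec x) ψ) :=
        tensVec_phiPlus_comp_prodAssoc_symm ψ

end
end

section
/- Let (P_i)_{i∈ι} be a finite family of m ≥ 1 orthogonal projections on a complex inner product space, let ψ be a unit vector, and let ε ≥ 0 be such that Re⟨ψ, (P_iP_j + P_jP_i)ψ⟩ ≤ ε for all i ≠ j. Then the average acceptance probability satisfies (1/m)·Σ_{i∈ι} Re⟨ψ, P_iψ⟩ ≤ 1/√m + √ε. -/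
open scoped ComplexInnerProductSpace

/-!
By Cauchy-Schwarz, `∑ i, re ⟪ψ, P i ψ⟫ = re ⟪ψ, ∑ i, P i ψ⟫ ≤ ‖∑ i, P i ψ‖`. Expanding the square of
the right-hand side gives the sum of the entries of the Gram matrix of the vectors `P i ψ`. Its `m`
diagonal entries are at most `1` because projections are contractions, and by self-adjointness each
of its `m (m - 1)` off-diagonal entries has real part half of a cross term, hence at most `ε / 2`.
The average is thus at most `√(1 / m + (1 - 1 / m) ε / 2)`.
-/

lemma sqrt_add_le_add_sqrt {a b : ℝ} (ha : 0 ≤ a) (hb : 0 ≤ b) : √(a + b) ≤ √a + √b := by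
  simpa only [Real.sqrt_eq_rpow] using
    Real.rpow_add_le_add_rpow ha hb (by norm_num) (by norm_num)

lemma sqrt_add_one_sub_mul_le {t b : ℝ} (ht : 0 ≤ t) (hb : 0 ≤ b) :
    √(t + (1 - t) * b) ≤ √t + √b :=
  calc √(t + (1 - t) * b) ≤ √(t + b) := by
        gcongr
        nlinarith [mul_nonneg ht hb]
    _ ≤ √t + √b := sqrt_add_le_add_sqrt ht hb

section InnerProductSpace

open RCLike
open scoped InnerProductSpace

variable {𝕜 E ι : Type*} [RCLike 𝕜]

lemma norm_apply_le_of_isSymmetricProjection [NormedAddCommGroup E] [InnerProductSpace 𝕜 E]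
    {T : E →ₗ[𝕜] E} (hT : T.IsSymmetricProjection) (x : E) : ‖T x‖ ≤ ‖x‖ := by
  obtain ⟨K, _, rfl⟩ := LinearMap.isSymmetricProjection_iff_eq_coe_starProjection.mp hT
  exact K.norm_starProjection_apply_le x

variable [SeminormedAddCommGroup E] [InnerProductSpace 𝕜 E]

lemma norm_sum_sq_eq_sum_re_inner (s : Finset ι) (v : ι → E) :
    ‖∑ i ∈ s, v i‖ ^ 2 = ∑ i ∈ s, ∑ j ∈ s, re ⟪v i, v j⟫_𝕜 := by
  rw [← inner_self_eq_norm_sq (𝕜 := 𝕜), sum_inner, map_sum]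
  simp only [inner_sum, map_sum]

lemma norm_sum_sq_le_of_re_inner_le {s : Finset ι} {v : ι → E} {a b : ℝ}
    (hdiag : ∀ i ∈ s, ‖v i‖ ^ 2 ≤ a)
    (hoffDiag : ∀ i ∈ s, ∀ j ∈ s, i ≠ j → re ⟪v i, v j⟫_𝕜 ≤ b) :
    ‖∑ i ∈ s, v i‖ ^ 2 ≤ s.card * a + s.card * (s.card - 1) * b := by
  classical
  have hentry : ∀ i ∈ s, ∀ j ∈ s, re ⟪v i, v j⟫_𝕜 ≤ b + if i = j then a - b else 0 := by
    intro i hi j hj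
    split_ifs with hij
    · subst hij
      simpa [inner_self_eq_norm_sq] using hdiag i hi
    · simpa using hoffDiag i hi j hj hij
  calc ‖∑ i ∈ s, v i‖ ^ 2 = ∑ i ∈ s, ∑ j ∈ s, re ⟪v i, v j⟫_𝕜 := norm_sum_sq_eq_sum_re_inner s v
    _ ≤ ∑ i ∈ s, ∑ j ∈ s, (b + if i = j then a - b else 0) :=
        Finset.sum_le_sum fun i hi ↦ Finset.sum_le_sum (hentry i hi)
    _ = ∑ _i ∈ s, (s.card * b + (a - b)) :=
        Finset.sum_congr rfl fun _ hi ↦ by simp [Finset.sum_add_distrib, hi]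
    _ = s.card * a + s.card * (s.card - 1) * b := by
        rw [Finset.sum_const, nsmul_eq_mul]
        ring

lemma re_inner_apply_add_apply_eq_two_mul {S T : E →ₗ[𝕜] E} (hS : S.IsSymmetric)
    (hT : T.IsSymmetric) (x : E) :
    re ⟪x, S (T x) + T (S x)⟫_𝕜 = 2 * re ⟪S x, T x⟫_𝕜 := by
  rw [inner_add_right, ← hS x, ← hT x, map_add, inner_re_symm (T x), two_mul]

lemma sum_re_inner_le_norm_mul_norm_sum (s : Finset ι) (x : E) (v : ι → E) :
    ∑ i ∈ s, re ⟪x, v i⟫_𝕜 ≤ ‖x‖ * ‖∑ i ∈ s, v i‖ := by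
  rw [← map_sum, ← inner_sum]
  exact re_inner_le_norm _ _

theorem average_acceptance_bound_general [Fintype ι] [Nonempty ι] {T : ι → E →ₗ[𝕜] E}
    (hT : ∀ i, (T i).IsSymmetric) {ψ : E} (hψ : ‖ψ‖ ≤ 1) (hTψ : ∀ i, ‖T i ψ‖ ≤ 1) {ε : ℝ}
    (hcross : ∀ i j, i ≠ j → re ⟪ψ, T i (T j ψ) + T j (T i ψ)⟫_𝕜 ≤ ε) :
    (Fintype.card ι : ℝ)⁻¹ * ∑ i, re ⟪ψ, T i ψ⟫_𝕜
      ≤ √((Fintype.card ι : ℝ)⁻¹ + (1 - (Fintype.card ι : ℝ)⁻¹) * (ε / 2)) := by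
  have hoffDiag (i j : ι) (hij : i ≠ j) : re ⟪T i ψ, T j ψ⟫_𝕜 ≤ ε / 2 := by
    linarith [hcross i j hij, re_inner_apply_add_apply_eq_two_mul (hT i) (hT j) ψ]
  have hnorm := norm_sum_sq_le_of_re_inner_le (𝕜 := 𝕜) (s := Finset.univ) (v := fun i ↦ T i ψ)
    (fun i _ ↦ pow_le_one₀ (norm_nonneg _) (hTψ i)) fun i _ j _ ↦ hoffDiag i j
  rw [Finset.card_univ] at hnorm
  set m := (Fintype.card ι : ℝ)
  have hm : m ≠ 0 := Nat.cast_ne_zero.mpr Fintype.card_ne_zero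
  calc m⁻¹ * ∑ i, re ⟪ψ, T i ψ⟫_𝕜 ≤ m⁻¹ * ‖∑ i, T i ψ‖ := by
        gcongr
        exact (sum_re_inner_le_norm_mul_norm_sum _ ψ _).trans
          (mul_le_of_le_one_left (norm_nonneg _) hψ)
    _ ≤ √(m⁻¹ + (1 - m⁻¹) * (ε / 2)) := Real.le_sqrt_of_sq_le <| calc
        (m⁻¹ * ‖∑ i, T i ψ‖) ^ 2 = m⁻¹ ^ 2 * ‖∑ i, T i ψ‖ ^ 2 := mul_pow _ _ _
        _ ≤ m⁻¹ ^ 2 * (m * 1 + m * (m - 1) * (ε / 2)) := by gcongr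
        _ = m⁻¹ + (1 - m⁻¹) * (ε / 2) := by field_simp

end InnerProductSpace

/-- if `(P_i)_{i ∈ ι}` is a finite family of `m ≥ 1` orthogonal
projections on a complex inner product space, `ψ` is a unit vector, and all cross
terms satisfy `Re⟨ψ, (P_iP_j + P_jP_i)ψ⟩ ≤ ε` for `i ≠ j` (with `ε ≥ 0`), then the
average acceptance probability is at most `1/√m + √ε`. -/
theorem average_acceptance_bound {E : Type*} [NormedAddCommGroup E]
    [InnerProductSpace ℂ E] {ι : Type*} [Fintype ι]
    (P : ι → E →ₗ[ℂ] E)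
    (hPsa : ∀ (i : ι) (x y : E), ⟪P i x, y⟫ = ⟪x, P i y⟫)
    (hPidem : ∀ (i : ι) (x : E), P i (P i x) = P i x)
    (ψ : E) (hψ : ‖ψ‖ = 1)
    (ε : ℝ) (hε : 0 ≤ ε)
    (hcross : ∀ i j : ι, i ≠ j → (⟪ψ, P i (P j ψ) + P j (P i ψ)⟫).re ≤ ε)
    (hm : 1 ≤ Fintype.card ι) :
    (Fintype.card ι : ℝ)⁻¹ * ∑ i : ι, (⟪ψ, P i ψ⟫).re
      ≤ (Real.sqrt (Fintype.card ι))⁻¹ + Real.sqrt ε := by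
  have hP (i : ι) : (P i).IsSymmetricProjection := ⟨LinearMap.ext (hPidem i), hPsa i⟩
  have hPψ (i : ι) : ‖P i ψ‖ ≤ 1 := hψ ▸ norm_apply_le_of_isSymmetricProjection (hP i) ψ
  have : Nonempty ι := Fintype.card_pos_iff.mp hm
  calc (Fintype.card ι : ℝ)⁻¹ * ∑ i : ι, (⟪ψ, P i ψ⟫).re
      ≤ √((Fintype.card ι : ℝ)⁻¹ + (1 - (Fintype.card ι : ℝ)⁻¹) * (ε / 2)) :=
        average_acceptance_bound_general hPsa hψ.le hPψ hcross
    _ ≤ √((Fintype.card ι : ℝ)⁻¹) + √(ε / 2) :=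
        sqrt_add_one_sub_mul_le (by positivity) (by positivity)
    _ ≤ (√(Fintype.card ι))⁻¹ + √ε := by
        rw [Real.sqrt_inv]
        gcongr
        exact half_le_self hε
end
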